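/- Let $q$ be a prime power, $\mathbb{F}_q$ the finite field with $q$ elements, and $n$ a positive integer. Let $t_1, \ldots, t_r$ be positive integers and set $\tau = t_1 t_2 \cdots t_r$. Let $\mathcal{C}$ be a family of $r$-multichains in the subspace lattice $L_q(n)$ of $\mathbb{F}_q^n$ such that for each $k \in \{1,\ldots,r\}$ the family $\mathcal{C}_k$ is $t_k$-chain free. Then $|\mathcal{C}| \le m_1 + \cdots + m_\tau$, where $m_1, \ldots, m_\tau$ are the $\tau$ largest $q$-Gaussian multinomial coefficients $\genfrac{[}{]}{0pt}{}{n}{a_1,\ldots,a_{r+1}}_q$ over all $(r+1)$-tuples of non-negative integers $(a_1,\ldots,a_{r+1})$ with $a_1+\cdots+a_{r+1} = n$ (with $m_i = 0$ when $i$ exceeds the number $\binom{n+r}{r}$ of such tuples). -/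

import Mathlib

/-!
The proof is an LYM argument that uses ordered bases of `V = 𝔽_q^n` in place of maximal flags.

A basis `v` is adapted to a multichain `C` if each `C k` is spanned by the first `dim C k` vectors
of `v`. Choosing the vectors one by one shows that a multichain of type `a` (its tuple of dimension
jumps) has exactly `q ^ (n choose 2) * ∏ i, [a i]_q!` adapted bases (`natCard_adapted_chain`), out
of `q ^ (n choose 2) * [n]_q!` bases altogether; so a fraction `1 / M a` of the bases is adapted to
it, where `M a` is the Gaussian multinomial coefficient.

The `k`-th components of the members of `𝒞` to which a fixed basis is adapted lie in one flag, so
there are at most `t k` of them, and the basis is adapted to at most `τ = ∏ k, t k` members of `𝒞`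
(`card_multichain_le`). It is adapted to at most one member of each type
(`card_multichain_le_one`). Double counting (`sum_prod_qFact_le`) turns this into the inequalities
`∑ a, c a / M a ≤ τ` and `c a / M a ≤ 1`, where `c a` is the number of members of type `a`. Under
these constraints `∑ a, c a` is at most the sum of the `τ` largest `M a` (`sum_le_sumLargest`).
-/

/-- A family `S` of elements of a partial order is `t`-chain free if it contains
no chain of `t + 1` distinct elements totally ordered. -/
def ChainFree {α : Type*} [Preorder α] (t : ℕ) (S : Set α) : Prop :=
  ¬ ∃ c : Fin (t + 1) → α, StrictMono c ∧ ∀ i, c i ∈ S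

/-- The `q`-factorial `[m]_q! = (q^m - 1)(q^{m-1} - 1) ⋯ (q - 1)`. -/
def qFact (q m : ℕ) : ℕ := ∏ i ∈ Finset.range m, (q ^ (i + 1) - 1)

/-- The sum of the `k` largest elements of a multiset of naturals. -/
def sumLargest (M : Multiset ℕ) (k : ℕ) : ℕ :=
  (((M.sort (· ≤ ·)).reverse).take k).sum

open Finset Module

/-! ### Sums of the largest elements -/

/-- For a decreasing list there is a threshold `m` for which the excesses over `m` (truncated
subtraction) plus `m * k` are at most the sum of the first `k` entries. The `k`-th entry counted
from `0` works, or `0` if there is none. -/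
lemma exists_threshold (L : List ℕ) (hL : L.Pairwise (· ≥ ·)) (k : ℕ) :
    ∃ m, (m = 0 ∨ m ∈ L) ∧ (L.map (· - m)).sum + m * k ≤ (L.take k).sum := by
  induction L generalizing k with
  | nil => exact ⟨0, by simp⟩
  | cons x L ih =>
    rw [List.pairwise_cons] at hL
    obtain ⟨hx, hL⟩ := hL
    cases k with
    | zero =>
      refine ⟨x, by simp, ?_⟩
      have : ∀ y ∈ (x :: L).map (· - x), y = 0 := by
        intro y hy
        simp only [List.map_cons, List.mem_cons, List.mem_map] at hy
        rcases hy with rfl | ⟨z, hz, rfl⟩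
        · simp
        · have := hx z hz
          omega
      rw [List.sum_eq_zero this]
      simp
    | succ k =>
      obtain ⟨m, hm, h⟩ := ih hL k
      refine ⟨m, by rcases hm with hm | hm <;> simp [hm], ?_⟩
      have hmx : m ≤ x := by
        rcases hm with hm | hm
        · omega
        · exact hx m hm
      simp only [List.map_cons, List.sum_cons, List.take_succ_cons, mul_add, mul_one]
      omega

lemma sumLargest_threshold (M : Multiset ℕ) (k : ℕ) :
    ∃ m, (M.map (· - m)).sum + m * k ≤ sumLargest M k := by
  obtain ⟨m, -, h⟩ := exists_threshold ((M.sort (· ≤ ·)).reverse)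
    (by rw [List.pairwise_reverse]; exact M.pairwise_sort (· ≤ ·)) k
  refine ⟨m, le_trans (le_of_eq ?_) h⟩
  congr 1
  rw [List.map_reverse, List.sum_reverse, ← Multiset.sum_coe, ← Multiset.map_coe,
    Multiset.sort_eq]

/-- The linear program behind the bound: with `x a = c a / M a = c a * P a / Q`, the constraints
`x a ≤ 1` and `∑ x a ≤ k` force `∑ x a * M a` to be at most the sum of the `k` largest `M a`. -/
lemma sum_le_sumLargest {ι : Type*} (s : Finset ι) (c P M : ι → ℕ) (Q k : ℕ) (hQ : 0 < Q)
    (hPM : ∀ a ∈ s, P a * M a = Q) (hc : ∀ a ∈ s, c a * P a ≤ Q)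
    (hsum : ∑ a ∈ s, c a * P a ≤ k * Q) :
    ∑ a ∈ s, c a ≤ sumLargest (s.val.map M) k := by
  obtain ⟨m, hm⟩ := sumLargest_threshold (s.val.map M) k
  refine le_trans ?_ hm
  refine Nat.le_of_mul_le_mul_left ?_ hQ
  rw [Multiset.map_map, mul_add, mul_sum]
  calc ∑ a ∈ s, Q * c a ≤ ∑ a ∈ s, (Q * (M a - m) + m * (c a * P a)) := by
        refine sum_le_sum fun a ha => ?_
        calc Q * c a = c a * P a * M a := by rw [← hPM a ha]; ring
          _ ≤ c a * P a * ((M a - m) + m) := by gcongr; omega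
          _ = c a * P a * (M a - m) + m * (c a * P a) := by ring
          _ ≤ _ := by gcongr; exact hc a ha
    _ = Q * ∑ a ∈ s, (M a - m) + m * ∑ a ∈ s, c a * P a := by
        rw [sum_add_distrib, mul_sum, mul_sum]
    _ ≤ Q * ∑ a ∈ s, (M a - m) + m * (k * Q) := by gcongr
    _ = _ := by
        rw [show m * (k * Q) = Q * (m * k) by ring]
        rfl

/-! ### `q`-factorials -/

lemma qFact_succ (q m : ℕ) : qFact q (m + 1) = qFact q m * (q ^ (m + 1) - 1) := by
  simp [qFact, prod_range_succ]

lemma qFact_pos {q : ℕ} (hq : 1 < q) (m : ℕ) : 0 < qFact q m :=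
  prod_pos fun i _ => Nat.sub_pos_of_lt (Nat.one_lt_pow (by omega) hq)

lemma qFact_mul_dvd {q : ℕ} (hq : 1 < q) (a b : ℕ) : qFact q a * qFact q b ∣ qFact q (a + b) := by
  induction hs : a + b generalizing a b with
  | zero =>
    obtain ⟨rfl, rfl⟩ : a = 0 ∧ b = 0 := by omega
    simp [qFact]
  | succ s ih =>
    rcases a with _ | a
    · obtain rfl : b = s + 1 := by omega
      simp [qFact]
    rcases b with _ | b
    · obtain rfl : a = s := by omega
      simp [qFact]
    have h1 := ih a (b + 1) (by omega)
    have h2 := ih (a + 1) b (by omega)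
    -- the `q`-Pascal recursion
    have hpas : q ^ (s + 1) - 1 = q ^ (b + 1) * (q ^ (a + 1) - 1) + (q ^ (b + 1) - 1) := by
      rw [← hs, pow_add q (a + 1)]
      have e1 : 0 < q ^ (a + 1) := by positivity
      have e2 : 0 < q ^ (b + 1) := by positivity
      zify [Nat.one_le_iff_ne_zero.2 e1.ne', Nat.one_le_iff_ne_zero.2 e2.ne',
        Nat.one_le_iff_ne_zero.2 (mul_pos e1 e2).ne']
      ring
    rw [qFact_succ q s, hpas, mul_add]
    refine dvd_add ?_ ?_
    · rw [qFact_succ q a]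
      calc _ = (qFact q a * qFact q (b + 1)) * (q ^ (a + 1) - 1) := by ring
        _ ∣ qFact q s * (q ^ (b + 1) * (q ^ (a + 1) - 1)) :=
          mul_dvd_mul h1 (dvd_mul_left _ _)
    · rw [qFact_succ q b]
      calc _ = (qFact q (a + 1) * qFact q b) * (q ^ (b + 1) - 1) := by ring
        _ ∣ _ := mul_dvd_mul h2 dvd_rfl

lemma prod_qFact_dvd {q : ℕ} (hq : 1 < q) {ι : Type*} (s : Finset ι) (a : ι → ℕ) :
    ∏ i ∈ s, qFact q (a i) ∣ qFact q (∑ i ∈ s, a i) := by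
  classical
  induction s using Finset.induction_on with
  | empty => simp
  | insert i s hi ih =>
    rw [prod_insert hi, sum_insert hi]
    exact (mul_dvd_mul_left _ ih).trans (qFact_mul_dvd hq _ _)

lemma prod_pow_sub (q s a : ℕ) :
    ∏ x ∈ range a, (q ^ (s + a) - q ^ (s + x)) = (∏ x ∈ range a, q ^ (s + x)) * qFact q a := by
  rw [qFact, ← prod_range_reflect (fun i => q ^ (i + 1) - 1), ← prod_mul_distrib]
  refine prod_congr rfl fun x hx => ?_
  have := mem_range.1 hx
  rw [Nat.mul_sub, mul_one, ← pow_add]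
  congr 2
  omega

/-! ### Multichains, their types, and adapted tuples -/

section

variable {F V : Type*} [Field F] [AddCommGroup V] [Module F V]

/-- The multichain `C` padded to the sequence `⊥, C₁, …, C_r, ⊤, ⊤, …`. -/
def extendChain {r : ℕ} (C : Fin r → Submodule F V) : ℕ → Submodule F V
  | 0 => ⊥
  | i + 1 => if h : i < r then C ⟨i, h⟩ else ⊤

lemma extendChain_zero {r : ℕ} (C : Fin r → Submodule F V) : extendChain C 0 = ⊥ := rfl

lemma extendChain_succ {r : ℕ} (C : Fin r → Submodule F V) (k : Fin r) :
    extendChain C (k + 1) = C k :=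
  dif_pos k.2

lemma extendChain_of_lt {r : ℕ} (C : Fin r → Submodule F V) {i : ℕ} (h : r < i) :
    extendChain C i = ⊤ := by
  obtain ⟨i, rfl⟩ : ∃ l, i = l + 1 := ⟨i - 1, by omega⟩
  exact dif_neg (by omega)

lemma extendChain_mono {r : ℕ} {C : Fin r → Submodule F V} (hC : Monotone C) :
    Monotone (extendChain C) := by
  refine monotone_nat_of_le_succ fun i => ?_
  rcases i with _ | i
  · exact bot_le
  · by_cases h : i + 1 < r
    · simp only [extendChain, h, show i < r by omega, dif_pos]
      exact hC (by simp)
    · simp [extendChain, h]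

/-- The type of a multichain: the dimension jumps
`dim C₁, dim C₂ - dim C₁, …, n - dim C_r`. For monotone `C` the subtraction never truncates. -/
noncomputable def chainType {r : ℕ} (C : Fin r → Submodule F V) (i : Fin (r + 1)) : ℕ :=
  finrank F (extendChain C (i + 1)) - finrank F (extendChain C i)

/-- The tuple `v` is adapted to `C` if, for every `k`, its first `dim C k` vectors lie in `C k`.
For a basis `v` of `V` this says that all `C k` belong to the flag of `v`. -/
def Adapted {n r : ℕ} (v : Fin n → V) (C : Fin r → Submodule F V) : Prop :=
  ∀ k, ∀ j : Fin n, (j : ℕ) < finrank F (C k) → v j ∈ C k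

/-- The span of the first `m` vectors of `v`; the `initSpan v m` form the flag of `v`. -/
def initSpan {n : ℕ} (v : Fin n → V) (m : ℕ) : Submodule F V :=
  Submodule.span F (v '' {j | (j : ℕ) < m})

lemma initSpan_mono {n : ℕ} (v : Fin n → V) : Monotone (initSpan (F := F) v) :=
  fun _ _ h => Submodule.span_mono (Set.image_mono fun _ hj => lt_of_lt_of_le hj h)

lemma finrank_initSpan {n : ℕ} {v : Fin n → V} (hv : LinearIndependent F v) {m : ℕ} (hm : m ≤ n) :
    finrank F (initSpan (F := F) v m) = m := by
  have e : v '' {j | (j : ℕ) < m} = Set.range (fun j : Fin m => v (Fin.castLE hm j)) := by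
    ext x
    constructor
    · rintro ⟨j, hj, rfl⟩
      exact ⟨⟨j, hj⟩, rfl⟩
    · rintro ⟨j, rfl⟩
      exact ⟨Fin.castLE hm j, j.2, rfl⟩
  rw [initSpan, e]
  exact (finrank_span_eq_card (hv.comp _ (Fin.castLE_injective hm))).trans (Fintype.card_fin m)

variable [Finite V]

lemma finrank_extendChain_mono {r : ℕ} {C : Fin r → Submodule F V} (hC : Monotone C) :
    Monotone fun i => finrank F (extendChain C i) :=
  fun _ _ h => Submodule.finrank_mono (extendChain_mono hC h)

lemma sum_chainType {r : ℕ} {C : Fin r → Submodule F V} (hC : Monotone C) :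
    ∑ i, chainType C i = finrank F V := by
  have := Finset.sum_range_tsub (finrank_extendChain_mono hC) (r + 1)
  rw [Finset.sum_range] at this
  rw [extendChain_of_lt C (Nat.lt_succ_self r), extendChain_zero, finrank_top, finrank_bot,
    Nat.sub_zero] at this
  exact this

lemma finrank_eq_of_chainType_eq {r : ℕ} {C C' : Fin r → Submodule F V} (hC : Monotone C)
    (hC' : Monotone C') (h : chainType C = chainType C') (k : Fin r) :
    finrank F (C k) = finrank F (C' k) := by
  have key : ∀ i, i ≤ r + 1 → finrank F (extendChain C i) = finrank F (extendChain C' i) := by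
    intro i
    induction i with
    | zero => intro; rfl
    | succ i ih =>
      intro hi
      have h0 := ih (by omega)
      have h1 := congrFun h ⟨i, by omega⟩
      have h2 := finrank_extendChain_mono hC (Nat.le_succ i)
      have h3 := finrank_extendChain_mono hC' (Nat.le_succ i)
      simp only [chainType, Nat.succ_eq_add_one] at h1 h2 h3
      omega
  have := key (k + 1) (by omega)
  rwa [extendChain_succ, extendChain_succ] at this

/-! ### Multichains in the flag of a basis -/

/-- A subspace belonging to the flag of `v` is determined by its dimension. -/
lemma eq_initSpan {n : ℕ} (hn : finrank F V = n) {v : Fin n → V} (hv : LinearIndependent F v)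
    {A : Submodule F V} (h : ∀ j : Fin n, (j : ℕ) < finrank F A → v j ∈ A) :
    initSpan v (finrank F A) = A := by
  refine Submodule.eq_of_le_of_finrank_eq ?_ ?_
  · rw [initSpan, Submodule.span_le]
    rintro _ ⟨j, hj, rfl⟩
    exact h j hj
  · exact finrank_initSpan hv (hn ▸ Submodule.finrank_le A)

/-- The members of a `t`-chain free family that belong to the flag of a basis `v` form a chain, so
there are at most `t` of them. -/
lemma card_le_of_chainFree {n : ℕ} (hn : finrank F V = n) {v : Fin n → V}
    (hv : LinearIndependent F v) {t : ℕ} {S : Set (Submodule F V)} (hS : ChainFree t S)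
    (T : Finset (Submodule F V)) (hTS : ∀ A ∈ T, A ∈ S)
    (hT : ∀ A ∈ T, ∀ j : Fin n, (j : ℕ) < finrank F A → v j ∈ A) : T.card ≤ t := by
  classical
  by_contra hlt
  have hinj : Set.InjOn (fun A : Submodule F V => finrank F A) T := by
    intro A hA B hB hAB
    rw [← eq_initSpan hn hv (hT A hA), ← eq_initSpan hn hv (hT B hB)]
    exact congrArg _ hAB
  have hcard : t + 1 ≤ (T.image fun A : Submodule F V => finrank F A).card := by
    rw [card_image_of_injOn hinj]
    omega
  have hmem : ∀ i, ∃ A ∈ T, finrank F A = orderEmbOfCardLe _ hcard i := fun i =>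
    mem_image.1 (orderEmbOfCardLe_mem _ hcard i)
  choose c hcT hc using hmem
  refine hS ⟨c, fun i j hij => ?_, fun i => hTS _ (hcT i)⟩
  have hlt' : finrank F (c i) < finrank F (c j) := by
    rw [hc, hc]
    exact (orderEmbOfCardLe _ hcard).strictMono hij
  refine lt_of_le_of_ne ?_ fun h => by rw [h] at hlt'; exact lt_irrefl _ hlt'
  rw [← eq_initSpan hn hv (hT _ (hcT i)), ← eq_initSpan hn hv (hT _ (hcT j))]
  exact initSpan_mono v hlt'.le

lemma card_multichain_le {n r : ℕ} (hn : finrank F V = n) {v : Fin n → V}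
    (hv : LinearIndependent F v) (t : Fin r → ℕ) (𝒟 : Finset (Fin r → Submodule F V))
    (h𝒟 : ∀ C ∈ 𝒟, Adapted v C)
    (hchain : ∀ k : Fin r, ChainFree (t k) {A | ∃ C ∈ 𝒟, C k = A}) : 𝒟.card ≤ ∏ k, t k := by
  classical
  calc 𝒟.card ≤ (Fintype.piFinset fun k => 𝒟.image fun C => C k).card :=
        card_le_card fun C hC => Fintype.mem_piFinset.2 fun k => mem_image_of_mem _ hC
    _ = ∏ k, (𝒟.image fun C => C k).card := Fintype.card_piFinset _
    _ ≤ ∏ k, t k := by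
        refine prod_le_prod' fun k _ => ?_
        refine card_le_of_chainFree hn hv (hchain k) _ (fun A hA => by simpa using hA) ?_
        intro A hA
        obtain ⟨C, hC, rfl⟩ := mem_image.1 hA
        exact h𝒟 C hC k

lemma card_multichain_le_one {n r : ℕ} (hn : finrank F V = n) {v : Fin n → V}
    (hv : LinearIndependent F v) (a : Fin (r + 1) → ℕ) (𝒟 : Finset (Fin r → Submodule F V))
    (hmc : ∀ C ∈ 𝒟, Monotone C) (h𝒟 : ∀ C ∈ 𝒟, Adapted v C)
    (ha : ∀ C ∈ 𝒟, chainType C = a) : 𝒟.card ≤ 1 := by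
  refine card_le_one.2 fun C hC C' hC' => funext fun k => ?_
  rw [← eq_initSpan hn hv (h𝒟 C hC k), ← eq_initSpan hn hv (h𝒟 C' hC' k),
    finrank_eq_of_chainType_eq (hmc C hC) (hmc C' hC') ((ha C hC).trans (ha C' hC').symm) k]

/-! ### Counting adapted bases -/

variable [Fintype F]

/-- Number of independent tuples with `v j ∈ W j` for an increasing sequence `W`: the earlier vectors
span a `j`-dimensional subspace of `W j`, which leaves `q ^ dim (W j) - q ^ j` choices for `v j`. -/
lemma natCard_adapted (W : ℕ → Submodule F V) (m : ℕ) (hW : ∀ i j, i ≤ j → j < m → W i ≤ W j) :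
    Nat.card {v : Fin m → V // LinearIndependent F v ∧ ∀ j : Fin _, v j ∈ W j} =
      ∏ j ∈ range m, (Fintype.card F ^ finrank F (W j) - Fintype.card F ^ j) := by
  induction m with
  | zero => simp
  | succ m ih =>
    have ih := ih fun i j hij hj => hW i j hij (by omega)
    let e : {v : Fin (m + 1) → V // LinearIndependent F v ∧ ∀ j : Fin _, v j ∈ W j} ≃
        Σ v : {v : Fin m → V // LinearIndependent F v ∧ ∀ j : Fin _, v j ∈ W j},
          ((W m : Set V) \ (Submodule.span F (Set.range v.1) : Set V) : Set V) :=
      { toFun := fun v => ⟨⟨Fin.init v.1, by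
            have h := v.2.1
            rw [← Fin.snoc_init_self v.1, linearIndependent_finSnoc] at h
            exact ⟨h.1, fun j => v.2.2 j.castSucc⟩⟩, v.1 (Fin.last m), by
            have h := v.2.1
            rw [← Fin.snoc_init_self v.1, linearIndependent_finSnoc] at h
            exact ⟨v.2.2 (Fin.last m), h.2⟩⟩
        invFun := fun p => ⟨Fin.snoc p.1.1 p.2.1, by
            refine ⟨linearIndependent_finSnoc.2 ⟨p.1.2.1, p.2.2.2⟩, fun j => ?_⟩
            refine Fin.lastCases ?_ (fun j => ?_) j
            · simpa using p.2.2.1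
            · simpa using p.1.2.2 j⟩
        left_inv := fun v => by
          ext1
          exact Fin.snoc_init_self v.1
        right_inv := fun p => by
          obtain ⟨⟨v, hv⟩, ⟨x, hx⟩⟩ := p
          have h1 : Fin.init (Fin.snoc v x : Fin (m + 1) → V) = v :=
            Fin.init_snoc (α := fun _ => V) _ _
          have h2 : (Fin.snoc v x : Fin (m + 1) → V) (Fin.last m) = x :=
            Fin.snoc_last (α := fun _ => V) _ _
          simp only [h2]
          congr! }
    have hfib : ∀ v : {v : Fin m → V // LinearIndependent F v ∧ ∀ j : Fin _, v j ∈ W j},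
        Nat.card ((W m : Set V) \ (Submodule.span F (Set.range v.1) : Set V) : Set V) =
          Fintype.card F ^ finrank F (W m) - Fintype.card F ^ m := by
      intro v
      have hle : Submodule.span F (Set.range v.1) ≤ W m := by
        rw [Submodule.span_le]
        rintro _ ⟨j, rfl⟩
        exact hW j m (by omega) (by omega) (v.2.2 j)
      rw [Nat.card_coe_set_eq, Set.ncard_sdiff (by exact_mod_cast hle), ← Nat.card_coe_set_eq,
        ← Nat.card_coe_set_eq]
      congr 1
      · exact (Module.natCard_eq_pow_finrank (K := F) (V := W m)).trans (by simp)
      · refine (Module.natCard_eq_pow_finrank (K := F)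
          (V := Submodule.span F (Set.range v.1))).trans ?_
        rw [finrank_span_eq_card v.2.1]
        simp
    have := Fintype.ofFinite {v : Fin m → V // LinearIndependent F v ∧ ∀ j : Fin _, v j ∈ W j}
    rw [Nat.card_congr e, Nat.card_sigma, sum_congr rfl fun v _ => hfib v, prod_range_succ, ← ih]
    simp

/-- The number of bases adapted to a multichain of type `a` is `q ^ (n choose 2) * ∏ i, [a i]_q!`,
with `q ^ (n choose 2)` written as `∏ j < n, q ^ j`. In particular it depends only on the type. -/
lemma natCard_adapted_chain {n r : ℕ} (hn : finrank F V = n) {C : Fin r → Submodule F V}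
    (hC : Monotone C) :
    Nat.card {v : Fin n → V // LinearIndependent F v ∧ Adapted v C} =
      (∏ j ∈ range n, Fintype.card F ^ j) * ∏ i, qFact (Fintype.card F) (chainType C i) := by
  set D := extendChain C with hD
  have hDm : Monotone D := extendChain_mono hC
  have hsm : Monotone fun i => finrank F (D i) := finrank_extendChain_mono hC
  have hDtop : D (r + 1) = ⊤ := extendChain_of_lt C (Nat.lt_succ_self r)
  have hDn : finrank F (D (r + 1)) = n := by rw [hDtop, finrank_top, hn]
  -- `D (κ j)` is the smallest member of the padded chain of dimension greater than `j`, so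
  -- adaptedness amounts to `v j ∈ D (κ j)` for all `j`
  let κ : ℕ → ℕ := fun j => sInf {k | j < finrank F (D k)}
  have hκ : ∀ j < n, j < finrank F (D (κ j)) := fun j hj =>
    Nat.sInf_mem (s := {k | j < finrank F (D k)}) ⟨r + 1, by simpa [hDn] using hj⟩
  have hκle : ∀ j k, j < finrank F (D k) → κ j ≤ k := fun j k h => Nat.sInf_le h
  have hiff : ∀ v : Fin n → V, (LinearIndependent F v ∧ Adapted v C) ↔
      (LinearIndependent F v ∧ ∀ j : Fin n, v j ∈ D (κ j)) := by
    refine fun v => and_congr_right fun _ => ⟨fun h j => ?_, fun h k j hj => ?_⟩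
    · have h1 := hκ j j.2
      rcases hk : κ j with _ | k
      · rw [hk] at h1
        rw [hD, extendChain_zero, finrank_bot] at h1
        omega
      · rw [hk] at h1
        by_cases hkr : k < r
        · have e : D (k + 1) = C ⟨k, hkr⟩ := extendChain_succ C ⟨k, hkr⟩
          rw [e] at h1 ⊢
          exact h _ j h1
        · rw [hD, extendChain_of_lt C (by omega)]
          trivial
    · have e : D (k + 1) = C k := extendChain_succ C k
      rw [← e]
      exact hDm (hκle j _ (by rw [e]; exact hj)) (h j)
  rw [Nat.card_congr (Equiv.subtypeEquivRight hiff), natCard_adapted (fun j => D (κ j)) n]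
  -- the `i`-th block of indices, of length `a i`, contributes `[a i]_q!` up to powers of `q`
  · have key : ∀ i ≤ r + 1, ∏ j ∈ range (finrank F (D i)),
        (Fintype.card F ^ finrank F (D (κ j)) - Fintype.card F ^ j) =
        (∏ j ∈ range (finrank F (D i)), Fintype.card F ^ j) *
          ∏ l ∈ range i, qFact (Fintype.card F) (finrank F (D (l + 1)) - finrank F (D l)) := by
      intro i
      induction i with
      | zero =>
        intro
        have h0 : finrank F (D 0) = 0 := finrank_bot F V
        simp only [h0, range_zero, prod_empty, mul_one]
      | succ i ih =>
        intro hi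
        have h1 : finrank F (D i) ≤ finrank F (D (i + 1)) := hsm (Nat.le_succ i)
        obtain ⟨a, ha⟩ := Nat.exists_eq_add_of_le h1
        have hblock : ∀ x ∈ range a, κ (finrank F (D i) + x) = i + 1 := by
          intro x hx
          have hx := mem_range.1 hx
          refine le_antisymm (hκle _ _ (by omega)) ?_
          by_contra hlt
          have h2 := hκ (finrank F (D i) + x) (by
            have : finrank F (D (i + 1)) ≤ finrank F (D (r + 1)) := hsm hi
            omega)
          have h3 : finrank F (D (κ (finrank F (D i) + x))) ≤ finrank F (D i) := hsm (by omega)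
          omega
        have hprod : ∏ x ∈ range a, (Fintype.card F ^ finrank F (D (κ (finrank F (D i) + x))) -
            Fintype.card F ^ (finrank F (D i) + x)) =
            (∏ x ∈ range a, Fintype.card F ^ (finrank F (D i) + x)) * qFact (Fintype.card F) a := by
          rw [← prod_pow_sub]
          exact prod_congr rfl fun x hx => by rw [hblock x hx, ha]
        rw [prod_range_succ _ i, ha, Nat.add_sub_cancel_left, prod_range_add, prod_range_add,
          ih (by omega), hprod]
        ring
    have := key (r + 1) le_rfl
    rw [hDn] at this
    rw [this, Finset.prod_range (n := r + 1)]
    rfl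
  · intro i j hij hj
    exact hDm (hκle _ _ (lt_of_le_of_lt hij (hκ j hj)))

/-- Double counting of adapted pairs (basis, multichain): if every basis is adapted to at most `b`
members of `𝒟`, then `∑ C ∈ 𝒟, ∏ i, [a i (C)]_q! ≤ b * [n]_q!`. The common factor
`q ^ (n choose 2)` of both sides cancels. -/
lemma sum_prod_qFact_le {n r : ℕ} (hn : finrank F V = n) (b : ℕ)
    (𝒟 : Finset (Fin r → Submodule F V)) (hmc : ∀ C ∈ 𝒟, Monotone C)
    (hb : ∀ v : Fin n → V, LinearIndependent F v → ∀ 𝒢 ⊆ 𝒟, (∀ C ∈ 𝒢, Adapted v C) →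
      𝒢.card ≤ b) :
    ∑ C ∈ 𝒟, ∏ i, qFact (Fintype.card F) (chainType C i) ≤ b * qFact (Fintype.card F) n := by
  classical
  have := Fintype.ofFinite V
  set q := Fintype.card F with hq
  have hqpos : 0 < ∏ j ∈ range n, q ^ j := prod_pos fun j _ => pow_pos Fintype.card_pos j
  set B : Finset (Fin n → V) := univ.filter fun v => LinearIndependent F v with hB
  have hBcard : B.card = (∏ j ∈ range n, q ^ j) * qFact q n := by
    have h1 := card_linearIndependent (K := F) (V := V) (k := n) hn.ge
    rw [Nat.card_eq_fintype_card, Fintype.card_subtype] at h1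
    rw [hB, h1, ← Finset.prod_range (fun i => q ^ finrank F V - q ^ i), hn]
    simpa using prod_pow_sub q 0 n
  have hcount : ∀ C ∈ 𝒟, (B.bipartiteBelow Adapted C).card =
      (∏ j ∈ range n, q ^ j) * ∏ i, qFact q (chainType C i) := by
    intro C hC
    rw [← natCard_adapted_chain hn (hmc C hC), Nat.card_eq_fintype_card, Fintype.card_subtype,
      bipartiteBelow, hB, filter_filter]
  refine Nat.le_of_mul_le_mul_left ?_ hqpos
  calc _ = ∑ C ∈ 𝒟, (B.bipartiteBelow Adapted C).card := by
        rw [mul_sum]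
        exact (sum_congr rfl hcount).symm
    _ = ∑ v ∈ B, (𝒟.bipartiteAbove Adapted v).card :=
        (sum_card_bipartiteAbove_eq_sum_card_bipartiteBelow _).symm
    _ ≤ ∑ v ∈ B, b := sum_le_sum fun v hv => hb v (mem_filter.1 hv).2 _ (filter_subset _ _)
        fun C hC => (mem_filter.1 hC).2
    _ = _ := by
        rw [sum_const, smul_eq_mul, hBcard]
        ring

end

/-- **Theorem (bound on families of `r`-multichains in `L_q(n)`).**
If `𝒞` is a family of `r`-multichains of subspaces of `𝔽_q^n` such that the
`k`-th component family is `t k`-chain free for each `k`, then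
`|𝒞| ≤ m₁ + ⋯ + m_τ`, where `τ = t₁ ⋯ t_r` and `m₁, …, m_τ` are the `τ` largest
`q`-Gaussian multinomial coefficients `[n; a₁, …, a_{r+1}]_q` over
`(r+1)`-tuples with `∑ a i = n`. -/
theorem card_bound_multichain_q (q n r : ℕ) (hq : IsPrimePow q) (hn : 0 < n)
    (F : Type) [Field F] [Fintype F] (hF : Fintype.card F = q)
    (t : Fin r → ℕ) (ht : ∀ k, 0 < t k)
    (𝒞 : Finset (Fin r → Submodule F (Fin n → F)))
    (hmc : ∀ C ∈ 𝒞, Monotone C)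
    (hchain : ∀ k : Fin r, ChainFree (t k) {A | ∃ C ∈ 𝒞, C k = A}) :
    𝒞.card ≤ sumLargest
      ((Finset.Nat.antidiagonalTuple (r + 1) n).val.map
        (fun a => qFact q n / ∏ i, qFact q (a i)))
      (∏ k, t k) := by
  classical
  have hV : finrank F (Fin n → F) = n := by simp
  have hq1 : 1 < q := hq.one_lt
  subst hF
  have hty : ∀ C ∈ 𝒞, chainType C ∈ Finset.Nat.antidiagonalTuple (r + 1) n := fun C hC =>
    Finset.Nat.mem_antidiagonalTuple.2 ((sum_chainType (hmc C hC)).trans hV)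
  rw [card_eq_sum_card_fiberwise hty]
  -- within the fiber over `a`, every summand of `sum_prod_qFact_le` equals `∏ i, qFact q (a i)`
  have hfib : ∀ a, ∑ C ∈ 𝒞 with chainType C = a, ∏ i, qFact (Fintype.card F) (chainType C i) =
      (𝒞.filter fun C => chainType C = a).card * ∏ i, qFact (Fintype.card F) (a i) := by
    intro a
    rw [sum_congr rfl (g := fun _ => ∏ i, qFact (Fintype.card F) (a i)) fun C hC => by
      rw [(mem_filter.1 hC).2], sum_const, smul_eq_mul]
  refine sum_le_sumLargest _ _ (fun a => ∏ i, qFact (Fintype.card F) (a i)) _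
    (qFact (Fintype.card F) n) _ (qFact_pos hq1 n) ?_ ?_ ?_
  · intro a ha
    refine Nat.mul_div_cancel' ?_
    rw [← Finset.Nat.mem_antidiagonalTuple.1 ha]
    exact prod_qFact_dvd hq1 _ _
  · intro a _
    rw [← hfib]
    refine (sum_prod_qFact_le hV 1 _ (fun C hC => hmc C (mem_filter.1 hC).1) ?_).trans_eq
      (one_mul _)
    exact fun v hv 𝒢 h𝒢 had => card_multichain_le_one hV hv a 𝒢
      (fun C hC => hmc C (mem_filter.1 (h𝒢 hC)).1) had fun C hC => (mem_filter.1 (h𝒢 hC)).2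
  · rw [sum_congr rfl fun a _ => (hfib a).symm, sum_fiberwise_of_maps_to hty]
    refine sum_prod_qFact_le hV _ 𝒞 hmc fun v hv 𝒢 h𝒢 had => card_multichain_le hV hv t 𝒢 had ?_
    rintro k ⟨c, hc, hmem⟩
    refine hchain k ⟨c, hc, fun i => ?_⟩
    obtain ⟨C, hC, h⟩ := hmem i
    exact ⟨C, h𝒢 hC, h⟩
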